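/- arXiv:1708.00555 — 2 statements merged into one kernel-verified Lean document; each statement's English description precedes it below -/
import Mathlib

section
/- Let α ∈ (0, 1/2), z = Φ⁻¹(1-α), let m be a nonzero real number, σ > 0, and N a positive integer. Define the updated sample size N' = ⌈N σ² z² / m²⌉ and the reduced standard deviation σ' = √(N σ² / N'). Then Φ(|m|/σ') ≥ 1-α; consequently, if g is a real random variable with distribution N(m, σ'²), then P(m·g > 0) ≥ 1-α. -/
open MeasureTheory ProbabilityTheory

/-- `Φ`, the cumulative distribution function of the standard normal distribution `N(0,1)`. -/
noncomputable def stdNormalCDF (x : ℝ) : ℝ :=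
  ProbabilityTheory.cdf (ProbabilityTheory.gaussianReal 0 1) x

lemma stdNormalCDF_zero_le : stdNormalCDF 0 ≤ 1 / 2 := by
  unfold stdNormalCDF
  rw [cdf_eq_real]
  haveI := nullSingletonClass_gaussianReal (μ := 0) (v := 1) one_ne_zero
  have h1 : (gaussianReal 0 1).real (Set.Iic 0) = (gaussianReal 0 1).real (Set.Ioi 0) := by
    have h := gaussianReal_map_neg (μ := 0) (v := 1)
    rw [neg_zero] at h
    have h2 : gaussianReal 0 1 (Set.Iic 0) = gaussianReal 0 1 (Set.Ici 0) := by
      conv_lhs => rw [← h]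
      rw [Measure.map_apply measurable_neg measurableSet_Iic]
      congr 1
      ext x
      simp
    rw [measureReal_def, measureReal_def, h2, measure_congr Ioi_ae_eq_Ici]
  have h3 := probReal_add_probReal_compl (μ := gaussianReal 0 1) (s := Set.Iic (0:ℝ)) measurableSet_Iic
  rw [Set.compl_Iic, ← h1] at h3
  linarith

/-- Let `α ∈ (0, 1/2)`, `z = Φ⁻¹(1-α)`, `m ≠ 0`, `σ > 0` and `N` a positive integer.
With the updated sample size `N' = ⌈N σ² z² / m²⌉` and the reduced standard deviation
`σ' = √(N σ² / N')`, one has `Φ(|m|/σ') ≥ 1-α`; consequently, if `g` is a real random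
variable with distribution `N(m, σ'²)`, then `P(m·g > 0) ≥ 1-α`. -/
theorem sample_size_update_descent (α : ℝ) (hα : α ∈ Set.Ioo (0 : ℝ) (1 / 2))
    (z : ℝ) (hz : stdNormalCDF z = 1 - α) (m : ℝ) (hm : m ≠ 0) (σ : ℝ) (hσ : 0 < σ)
    (N : ℕ) (hN : 0 < N)
    (N' : ℕ) (hN' : N' = ⌈(N : ℝ) * σ ^ 2 * z ^ 2 / m ^ 2⌉₊)
    (σ' : ℝ) (hσ'def : σ' = Real.sqrt ((N : ℝ) * σ ^ 2 / (N' : ℝ)))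
    {Ω : Type*} [MeasurableSpace Ω] (P : Measure Ω) [IsProbabilityMeasure P]
    (g : Ω → ℝ) (hg : Measure.map g P = gaussianReal m ((σ' ^ 2).toNNReal)) :
    1 - α ≤ stdNormalCDF (|m| / σ') ∧
      ENNReal.ofReal (1 - α) ≤ P {ω | 0 < m * g ω} := by
  have hmono : Monotone stdNormalCDF := monotone_cdf _
  have hz0 : 0 < z := by
    by_contra hc
    have h1 := hmono (not_lt.mp hc)
    have h2 := stdNormalCDF_zero_le
    have h3 := hα.2
    linarith
  have hNr : (0:ℝ) < N := by exact_mod_cast hN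
  have hm2 : 0 < m ^ 2 := by positivity
  have hle : (N : ℝ) * σ ^ 2 * z ^ 2 / m ^ 2 ≤ (N' : ℝ) := by
    rw [hN']; exact Nat.le_ceil _
  have hN'0 : (0:ℝ) < N' := lt_of_lt_of_le (by positivity) hle
  have hσ' : 0 < σ' := by rw [hσ'def]; positivity
  have hsq : σ' ^ 2 = (N : ℝ) * σ ^ 2 / (N' : ℝ) := by
    rw [hσ'def, Real.sq_sqrt (by positivity)]
  have hma : 0 < |m| := abs_pos.mpr hm
  have hzl : z ≤ |m| / σ' := by
    rw [le_div_iff₀ hσ']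
    refine le_of_pow_le_pow_left₀ two_ne_zero hma.le ?_
    rw [mul_pow, hsq, sq_abs, mul_div_assoc', div_le_iff₀ hN'0]
    rw [div_le_iff₀ hm2] at hle
    linarith
  have hA : 1 - α ≤ stdNormalCDF (|m| / σ') := hz ▸ hmono hzl
  refine ⟨hA, ?_⟩
  have hgm : AEMeasurable g P := by
    apply AEMeasurable.of_map_ne_zero
    rw [hg]
    exact IsProbabilityMeasure.ne_zero _
  have hS : MeasurableSet {x : ℝ | 0 < m * x} :=
    measurableSet_lt measurable_const (measurable_const.mul measurable_id)
  have hP : P {ω | 0 < m * g ω} = gaussianReal m ((σ' ^ 2).toNNReal) {x | 0 < m * x} := by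
    rw [← hg, Measure.map_apply_of_aemeasurable hgm hS]
    rfl
  have hlaw : gaussianReal m ((σ' ^ 2).toNNReal)
      = (gaussianReal 0 1).map (fun x => -(m / |m| * σ') * x + m) := by
    have h1 := gaussianReal_map_const_mul (μ := 0) (v := 1) (-(m / |m| * σ'))
    have h2 := gaussianReal_map_add_const (μ := 0) (v := (σ' ^ 2).toNNReal) m
    have h3 : (-(m / |m| * σ')) ^ 2 = σ' ^ 2 := by
      rw [neg_sq, mul_pow, div_pow, sq_abs, div_self hm2.ne', one_mul]
    have h4 : (⟨(-(m / |m| * σ')) ^ 2, sq_nonneg _⟩ : NNReal) * 1 = (σ' ^ 2).toNNReal := by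
      ext
      simp only [mul_one, NNReal.coe_mk, h3]
      exact (Real.coe_toNNReal _ (sq_nonneg _)).symm
    rw [mul_zero] at h1
    erw [h4] at h1
    rw [zero_add, ← h1, Measure.map_map (by fun_prop) (by fun_prop)] at h2
    rw [← h2]
    rfl
  rw [hP, hlaw, Measure.map_apply (by fun_prop) hS]
  have hpre : (fun x => -(m / |m| * σ') * x + m) ⁻¹' {x : ℝ | 0 < m * x}
      = Set.Iio (|m| / σ') := by
    ext x
    simp only [Set.mem_preimage, Set.mem_setOf_eq, Set.mem_Iio]
    have : m * (-(m / |m| * σ') * x + m) = |m| * (|m| - x * σ') := by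
      field_simp
      have := sq_abs m
      rw [← this]
      ring
    rw [this, mul_pos_iff_of_pos_left hma, sub_pos, lt_div_iff₀ hσ']
  haveI := nullSingletonClass_gaussianReal (μ := 0) (v := 1) one_ne_zero
  rw [hpre, measure_congr Iio_ae_eq_Iic, ← ofReal_cdf]
  exact ENNReal.ofReal_le_ofReal hA
end

section
/- Let α ∈ (0, 1/2), z = Φ⁻¹(1-α), let ĝ ∈ ℝᵐ be nonzero, let s² > 0, and let N be a positive integer. Define N' = ⌈N s² z² / (ĝᵀĝ)²⌉. If the real random variable T (modeling ĝᵀg(x)) has distribution N(ĝᵀĝ, N s² / N'), then P(T > 0) ≥ 1-α. -/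
open MeasureTheory ProbabilityTheory
open scoped RealInnerProductSpace

/-- Let `α ∈ (0, 1/2)`, `z = Φ⁻¹(1-α)`, `ĝ ∈ ℝᵐ` nonzero, `s² > 0`, `N` a positive integer,
and `N' = ⌈N s² z² / (ĝᵀĝ)²⌉`. If the real random variable `T` (modeling `ĝᵀg(x)`) has
distribution `N(ĝᵀĝ, N s² / N')`, then `P(T > 0) ≥ 1-α`. -/
theorem single_update_rule_descent (α : ℝ) (hα : α ∈ Set.Ioo (0 : ℝ) (1 / 2))
    (z : ℝ) (hz : stdNormalCDF z = 1 - α) {m : ℕ}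
    (ghat : EuclideanSpace ℝ (Fin m)) (hghat : ghat ≠ 0)
    (s2 : ℝ) (hs2 : 0 < s2) (N : ℕ) (hN : 0 < N)
    (N' : ℕ) (hN' : N' = ⌈(N : ℝ) * s2 * z ^ 2 / (⟪ghat, ghat⟫ : ℝ) ^ 2⌉₊)
    {Ω : Type*} [MeasurableSpace Ω] (P : Measure Ω) [IsProbabilityMeasure P]
    (T : Ω → ℝ)
    (hT : Measure.map T P = gaussianReal ⟪ghat, ghat⟫ (((N : ℝ) * s2 / (N' : ℝ)).toNNReal)) :
    ENNReal.ofReal (1 - α) ≤ P {ω | 0 < T ω} := by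
  have hμ : 0 < (⟪ghat, ghat⟫ : ℝ) := real_inner_self_pos.mpr hghat
  generalize (⟪ghat, ghat⟫ : ℝ) = μ at *
  set v : ℝ := (N : ℝ) * s2 / (N' : ℝ) with hv
  have hv0 : 0 ≤ v := by positivity
  have hle : (N : ℝ) * s2 * z ^ 2 / μ ^ 2 ≤ (N' : ℝ) := by
    rw [hN']; exact Nat.le_ceil _
  have hTm : AEMeasurable T P := by
    by_contra h
    rw [Measure.map_of_not_aemeasurable h] at hT
    exact IsProbabilityMeasure.ne_zero (gaussianReal μ v.toNNReal) hT.symm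
  have hσz : Real.sqrt v * z ≤ μ := by
    refine (abs_le_of_sq_le_sq' ?_ hμ.le).2
    rw [mul_pow, Real.sq_sqrt hv0, hv]
    rcases Nat.eq_zero_or_pos N' with h0 | h0
    · rw [h0]; simp; positivity
    · have h1 : (0 : ℝ) < N' := by exact_mod_cast h0
      rw [div_le_iff₀ (by positivity)] at hle
      rw [div_mul_eq_mul_div, div_le_iff₀ h1]
      linarith
  have hmap : (gaussianReal 0 1).map (fun x => μ - Real.sqrt v * x) = gaussianReal μ v.toNNReal := by
    have : (fun x => μ - Real.sqrt v * x) = (fun y => μ - y) ∘ (fun x => Real.sqrt v * x) := rfl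
    rw [this, ← Measure.map_map (by fun_prop) (by fun_prop), gaussianReal_map_const_mul,
      gaussianReal_map_const_sub]
    congr 1
    · simp
    · ext; simp [Real.sq_sqrt hv0, hv0]
  have hP : P {ω | 0 < T ω} = gaussianReal μ v.toNNReal (Set.Ioi 0) := by
    rw [← hT, Measure.map_apply_of_aemeasurable hTm measurableSet_Ioi]; rfl
  haveI := nullSingletonClass_gaussianReal (μ := 0) (v := 1) one_ne_zero
  rw [hP, ← hmap, Measure.map_apply (by fun_prop) measurableSet_Ioi, ← hz, stdNormalCDF,
    ofReal_cdf, ← measure_congr Iio_ae_eq_Iic]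
  apply measure_mono
  intro x hx
  simp only [Set.mem_Iio] at hx
  simp only [Set.mem_preimage, Set.mem_Ioi, sub_pos]
  rcases (Real.sqrt_nonneg v).eq_or_lt with h | h
  · rw [← h]; simpa using hμ
  · exact (mul_lt_mul_of_pos_left hx h).trans_le hσz
end
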